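/- Let M=(Q,V,δ,q₀,F) be a DFAwtl with k=#Q states. For every word w∈L(M) with jc_M(w)=m, there exists a word w′∈L(M) such that jc_M(w′)=m and |w′| ≤ (2m+1)(k−1)+m. -/

import Mathlib

/-- A deterministic finite automaton with translucent letters (DFAwtl):
`delta` is a partial transition function, `start` the initial state,
`accept` the set of final states. -/
structure DFAwtl (Q V : Type*) where
  delta : Q → V → Option Q
  start : Q
  accept : Set Q

namespace DFAwtl

variable {Q V : Type*}

/-- Sequential step: `(s, a·y) → (p, y)` when `δ(s,a) = p`. -/
def SeqStep (M : DFAwtl Q V) (c c' : Q × List V) : Prop :=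
  ∃ a : V, c.2 = a :: c'.2 ∧ M.delta c.1 a = some c'.1

/-- Jumping step: `(s, x·a·y) ↻ (p, x·y)` when `x ≠ ε`, `δ(s,a) = p`, and
`δ(s,b)` is undefined for every letter `b` occurring in `x`. -/
def JumpStep (M : DFAwtl Q V) (c c' : Q × List V) : Prop :=
  ∃ (x y : List V) (a : V), x ≠ [] ∧ c.2 = x ++ a :: y ∧ c'.2 = x ++ y ∧
    M.delta c.1 a = some c'.1 ∧ ∀ b ∈ x, M.delta c.1 b = none

/-- Either a sequential or a jumping step. -/
def Step (M : DFAwtl Q V) (c c' : Q × List V) : Prop :=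
  M.SeqStep c c' ∨ M.JumpStep c c'

/-- Reflexive–transitive closure of sequential steps (the relation `→*`). -/
def SeqSteps (M : DFAwtl Q V) : Q × List V → Q × List V → Prop :=
  Relation.ReflTransGen M.SeqStep

/-- Reflexive–transitive closure of all steps (the relation `⊨*`). -/
def Steps (M : DFAwtl Q V) : Q × List V → Q × List V → Prop :=
  Relation.ReflTransGen M.Step

/-- `StepsN M c c' k` : configuration `c'` is reachable from `c` by a computation
containing exactly `k` jumping steps. -/
inductive StepsN (M : DFAwtl Q V) : Q × List V → Q × List V → ℕ → Prop
  | refl (c : Q × List V) : StepsN M c c 0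
  | seq {c c' c'' : Q × List V} {n : ℕ} :
      M.SeqStep c c' → StepsN M c' c'' n → StepsN M c c'' n
  | jump {c c' c'' : Q × List V} {n : ℕ} :
      M.JumpStep c c' → StepsN M c' c'' n → StepsN M c c'' (n + 1)

/-- The language accepted by `M`. -/
def lang (M : DFAwtl Q V) : Set (List V) :=
  {w | ∃ f ∈ M.accept, M.Steps (M.start, w) (f, [])}

/-- `M` accepts `w` by a computation with exactly `k` jumping steps. -/
def AcceptsIn (M : DFAwtl Q V) (w : List V) (k : ℕ) : Prop :=
  ∃ f ∈ M.accept, M.StepsN (M.start, w) (f, []) k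

/-- The jump complexity of a word: the (for a deterministic machine, unique)
number of jumping steps in an accepting computation on `w`. -/
noncomputable def jc (M : DFAwtl Q V) (w : List V) : ℕ :=
  sInf {k | M.AcceptsIn w k}

/-- The jump complexity function: the maximal number of jumps over accepted
words of length `n`. -/
noncomputable def JC (M : DFAwtl Q V) (n : ℕ) : ℕ :=
  sSup {k | ∃ w ∈ M.lang, w.length = n ∧ M.jc w = k}

/-- `JC_M` is bounded by a constant. -/
def ConstBounded (M : DFAwtl Q V) : Prop :=
  ∃ c : ℕ, ∀ w ∈ M.lang, M.jc w ≤ c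

/-- Extended (sequential) transition function on words. -/
def deltaStar (M : DFAwtl Q V) (q : Q) (w : List V) : Option Q :=
  w.foldl (fun o a => o.bind fun p => M.delta p a) (some q)

/-- A state `q` is `a`-deficient if `δ(q,a)` is undefined. -/
def Deficient (M : DFAwtl Q V) (q : Q) (a : V) : Prop :=
  M.delta q a = none

/-- The set `⟨q,a⟩` (empty when `δ(q,a)` is defined). -/
def angleSet (M : DFAwtl Q V) (q : Q) (a : V) : Set Q :=
  {s | M.delta q a = none ∧ ∃ x : List V, x ≠ [] ∧
    M.SeqSteps (q, x) (s, []) ∧ M.Steps (s, a :: x) (q, [])}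

/-- The set `[q,a]` (empty when `δ(q,a)` is defined). -/
def bracketSet (M : DFAwtl Q V) (q : Q) (a : V) : Set Q :=
  {s | M.delta q a = none ∧ ∃ x : List V, x ≠ [] ∧
    M.SeqSteps (q, x) (s, []) ∧ M.SeqSteps (s, a :: x) (q, [])}

/-- Every state of the automaton is useful. -/
def AllUseful (M : DFAwtl Q V) : Prop :=
  ∀ q : Q, (∃ x : List V, M.SeqSteps (M.start, x) (q, [])) ∧
    (∃ (y : List V) (f : Q), f ∈ M.accept ∧ M.SeqSteps ((q : Q), y) (f, []))

/-- `δ(q,x')` is `a`-deficient for every prefix `x'` of `x`. -/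
def PrefixDeficient (M : DFAwtl Q V) (q : Q) (a : V) (x : List V) : Prop :=
  ∀ x' : List V, ∀ p : Q, x' <+: x → M.deltaStar q x' = some p → M.delta p a = none

/-- `δ(q,y')` is `a`-deficient for every proper prefix `y'` of `y`. -/
def ProperPrefixDeficient (M : DFAwtl Q V) (q : Q) (a : V) (y : List V) : Prop :=
  ∀ y' : List V, ∀ p : Q, y' <+: y → y' ≠ y → M.deltaStar q y' = some p → M.delta p a = none

/-- The condition of Claim 2: a pair `(q,a)` with `δ(q,a)` undefined, a nonempty
cycle in `q` visiting only `a`-deficient states, and an accepting path from `q`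
reading a word `y` without `a` through `a`-deficient states and then an `a`. -/
def ClaimTwoCondition (M : DFAwtl Q V) (q : Q) (a : V) : Prop :=
  M.delta q a = none ∧
  (∃ x : List V, x ≠ [] ∧ M.SeqSteps (q, x) (q, []) ∧ M.PrefixDeficient q a x) ∧
  (∃ (y z : List V) (f : Q), a ∉ y ∧ f ∈ M.accept ∧
    M.SeqSteps (q, y ++ a :: z) (f, []) ∧ M.ProperPrefixDeficient q a y)

end DFAwtl

namespace DFAwtl

variable {Q V : Type*}

/-- `p 0, p 1, …, p n = p 0` is a circuit in the transition graph of `M`,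
with the `i`-th edge labelled by the letter `a i`. -/
def IsCircuit (M : DFAwtl Q V) (n : ℕ) (p : ℕ → Q) (a : ℕ → V) : Prop :=
  0 < n ∧ p n = p 0 ∧ ∀ i < n, M.delta (p i) (a i) = some (p (i + 1))

/-- The circuit is `x`-jumping: every state of the circuit from which an `x` is read
is `b`-deficient for some letter `b`, and at least one edge is labelled by a letter
other than `x`. -/
def IsXJumpingCircuit (M : DFAwtl Q V) (n : ℕ) (p : ℕ → Q) (a : ℕ → V) (x : V) : Prop :=
  M.IsCircuit n p a ∧ (∀ i < n, a i = x → ∃ b : V, M.delta (p i) b = none) ∧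
    ∃ i < n, a i ≠ x

/-- The state `q` is reachable from the initial state. -/
def ReachableState (M : DFAwtl Q V) (q : Q) : Prop :=
  ∃ u : List V, M.Steps (M.start, u) (q, [])

end DFAwtl
-- end preamble

namespace DFAwtl

inductive NPath {Q V : Type*} (M : DFAwtl Q V) : Q → List V → Q → List Q → Prop
  | nil (q : Q) : NPath M q [] q [q]
  | cons {q q1 p : Q} {a : V} {u : List V} {l : List Q} :
      M.delta q a = some q1 → NPath M q1 u p l → q ∉ l → NPath M q (a :: u) p (q :: l)

inductive SPath {Q V : Type*} (M : DFAwtl Q V) : Q → List V → Q → Prop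
  | nil (q : Q) : SPath M q [] q
  | cons {q q1 p : Q} {a : V} {u : List V} :
      M.delta q a = some q1 → SPath M q1 u p → SPath M q (a :: u) p

theorem NPath.suffix {Q V : Type*} {M : DFAwtl Q V} {q p : Q} {u : List V} {l : List Q}
    (h : NPath M q u p l) : ∀ r ∈ l, ∃ u' l', u'.Sublist u ∧ NPath M r u' p l' := by
  induction h with
  | nil q =>
    intro r hr
    rw [List.mem_singleton] at hr
    subst hr
    exact ⟨[], [r], List.Sublist.refl _, .nil r⟩
  | @cons q q1 p a u l hd hp hn ih =>
    intro r hr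
    rcases List.mem_cons.1 hr with rfl | hr
    · exact ⟨_, _, List.Sublist.refl _, .cons hd hp hn⟩
    · obtain ⟨u', l', h1, h2⟩ := ih r hr
      exact ⟨u', l', h1.trans (List.sublist_cons_self _ _), h2⟩

theorem NPath.facts {Q V : Type*} {M : DFAwtl Q V} {q p : Q} {u : List V} {l : List Q}
    (h : NPath M q u p l) : l.Nodup ∧ l.length = u.length + 1 ∧ SPath M q u p := by
  induction h with
  | nil q => exact ⟨by simp, by simp, .nil q⟩
  | cons hd hp hn ih =>
    exact ⟨List.nodup_cons.2 ⟨hn, ih.1⟩, by simp [ih.2.1], .cons hd ih.2.2⟩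

theorem SPath.exists_npath {Q V : Type*} {M : DFAwtl Q V} {q p : Q} {u : List V}
    (h : SPath M q u p) : ∃ u' l, u'.Sublist u ∧ NPath M q u' p l := by
  induction h with
  | nil q => exact ⟨[], [q], List.Sublist.refl _, .nil q⟩
  | @cons q q1 p a u hd hp ih =>
    obtain ⟨u', l, h1, h2⟩ := ih
    by_cases hq : q ∈ l
    · obtain ⟨u'', l', h3, h4⟩ := h2.suffix q hq
      exact ⟨u'', l', (h3.trans h1).trans (List.sublist_cons_self _ _), h4⟩
    · exact ⟨a :: u', q :: l, h1.cons_cons a, .cons hd h2 hq⟩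

theorem SPath.short {Q V : Type*} [Fintype Q] {M : DFAwtl Q V} {q p : Q} {u : List V}
    (h : SPath M q u p) :
    ∃ u', u'.Sublist u ∧ SPath M q u' p ∧ u'.length + 1 ≤ Fintype.card Q := by
  obtain ⟨u', l, h1, h2⟩ := h.exists_npath
  obtain ⟨h3, h4, h5⟩ := h2.facts
  exact ⟨u', h1, h5, h4 ▸ h3.length_le_card⟩

theorem SPath.stepsN {Q V : Type*} {M : DFAwtl Q V} {q p : Q} {u : List V}
    (h : SPath M q u p) {v : List V} {c : Q × List V} {n : ℕ} (hc : M.StepsN (p, v) c n) :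
    M.StepsN (q, u ++ v) c n := by
  induction h with
  | nil q => exact hc
  | @cons q q1 p a u hd hp ih => exact .seq (c' := (q1, u ++ v)) ⟨a, rfl, hd⟩ (ih hc)

theorem StepsN.decomp {Q V : Type*} {M : DFAwtl Q V} {c d : Q × List V} {n : ℕ}
    (h : M.StepsN c d n) (hd : d.2 = []) :
    ∃ u v p, c.2 = u ++ v ∧ SPath M c.1 u p ∧
      ((n = 0 ∧ v = [] ∧ p = d.1) ∨
        ∃ m c', n = m + 1 ∧ M.JumpStep (p, v) c' ∧ M.StepsN c' d m) := by
  induction h with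
  | refl c => exact ⟨[], [], c.1, by simpa using hd, .nil _, .inl ⟨rfl, rfl, rfl⟩⟩
  | @seq c c' c'' n hs hr ih =>
    obtain ⟨u, v, p, h1, h2, h3⟩ := ih hd
    obtain ⟨a, ha, hda⟩ := hs
    exact ⟨a :: u, v, p, by simp [ha, h1], .cons hda h2, h3⟩
  | @jump c c' c'' n hs hr ih =>
    exact ⟨[], c.2, c.1, rfl, .nil _, .inr ⟨n, c', rfl, hs, hr⟩⟩

theorem jump_lift {Q V : Type*} {M : DFAwtl Q V} {p p' f : Q} {v z z' : List V} {m : ℕ}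
    (hj : M.JumpStep (p, v) (p', z)) (hs : z'.Sublist z) (hh : z'.head? = z.head?)
    (hn : M.StepsN (p', z') (f, []) m) :
    ∃ v', v'.Sublist v ∧ v'.head? = v.head? ∧ M.StepsN (p, v') (f, []) (m + 1) ∧
      v'.length = z'.length + 1 := by
  obtain ⟨x, y, a, hx, h1, h2, h3, h4⟩ := hj
  simp only at h1 h2 h3 h4
  subst h1 h2
  obtain ⟨c, x0, rfl⟩ := List.exists_cons_of_ne_nil hx
  cases z' with
  | nil => simp at hh
  | cons d t =>
    simp only [List.cons_append, List.head?_cons, Option.some.injEq] at hh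
    subst hh
    rw [List.cons_append, List.cons_sublist_cons, List.sublist_append_iff] at hs
    obtain ⟨t1, t2, rfl, ht1, ht2⟩ := hs
    refine ⟨d :: t1 ++ a :: t2, ?_, by simp, ?_, by simp; omega⟩
    · exact (ht1.cons_cons d).append (ht2.cons_cons a)
    · refine .jump (c' := (p', d :: (t1 ++ t2))) ⟨d :: t1, t2, a, by simp, rfl, rfl, h3, ?_⟩ hn
      intro b hb
      exact h4 b ((ht1.cons_cons d).subset hb)

theorem shorten {Q V : Type*} [Fintype Q] {M : DFAwtl Q V} {f : Q} (m : ℕ) :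
    ∀ (q : Q) (w : List V), M.StepsN (q, w) (f, []) m →
    ∃ w', w'.Sublist w ∧ w'.head? = w.head? ∧ M.StepsN (q, w') (f, []) m ∧
      w'.length ≤ m * (Fintype.card Q + 1) + Fintype.card Q := by
  induction m with
  | zero =>
    intro q w h
    obtain ⟨u, v, p, h1, h2, h3⟩ := h.decomp rfl
    rcases h3 with ⟨-, rfl, rfl⟩ | ⟨m, c', h, -⟩
    · simp only [List.append_nil] at h1 h2
      subst h1
      cases h2 with
      | nil => exact ⟨[], List.Sublist.refl _, rfl, .refl _, by simp⟩
      | @cons _ q1 _ a u hd hp =>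
        obtain ⟨u', k1, k2, k3⟩ := hp.short
        refine ⟨a :: u', k1.cons_cons a, rfl, ?_, by simp; omega⟩
        simpa using (SPath.cons hd k2).stepsN (.refl (_, []))
    · omega
  | succ m ih =>
    intro q w h
    obtain ⟨u, v, p, h1, h2, h3⟩ := h.decomp rfl
    rcases h3 with ⟨h, -⟩ | ⟨m', ⟨p', z⟩, h, hj, hs⟩
    · omega
    · obtain rfl : m = m' := by omega
      obtain ⟨z', a1, a2, a3, a4⟩ := ih p' z hs
      obtain ⟨v', b1, b2, b3, b4⟩ := jump_lift hj a1 a2 a3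
      simp only at h1 h2
      subst h1
      have e : (m + 1) * (Fintype.card Q + 1) = m * (Fintype.card Q + 1) + (Fintype.card Q + 1) := by
        ring
      cases h2 with
      | nil => exact ⟨v', b1, b2, b3, by omega⟩
      | @cons _ q1 _ a u hd hp =>
        obtain ⟨u', k1, k2, k3⟩ := hp.short
        refine ⟨a :: u' ++ v', (k1.cons_cons a).append b1, rfl, (SPath.cons hd k2).stepsN b3, ?_⟩
        simp only [List.length_append, List.length_cons]
        omega

theorem shorten' {Q V : Type*} [Fintype Q] {M : DFAwtl Q V} {f : Q} (m : ℕ) 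
    (q : Q) (w : List V) (h : M.StepsN (q, w) (f, []) m) :
    ∃ w', M.StepsN (q, w') (f, []) m ∧
      w'.length + 1 ≤ m * (Fintype.card Q + 1) + Fintype.card Q := by
  obtain ⟨u, v, p, h1, h2, h3⟩ := h.decomp rfl
  obtain ⟨u', k1, k2, k3⟩ := h2.short
  rcases h3 with ⟨rfl, rfl, rfl⟩ | ⟨m, ⟨p', z⟩, rfl, hj, hs⟩
  · exact ⟨u', by simpa using k2.stepsN (.refl (_, [])), by omega⟩
  · obtain ⟨z', a1, a2, a3, a4⟩ := shorten m p' z hs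
    obtain ⟨v', b1, b2, b3, b4⟩ := jump_lift hj a1 a2 a3
    have e : (m + 1) * (Fintype.card Q + 1) = m * (Fintype.card Q + 1) + (Fintype.card Q + 1) := by
      ring
    refine ⟨u' ++ v', k2.stepsN b3, ?_⟩
    simp only [List.length_append]
    omega

theorem StepsN.of_subsingleton {Q V : Type*} [Subsingleton Q] {M : DFAwtl Q V}
    {c d : Q × List V} {n : ℕ} (h : M.StepsN c d n) (hd : d.2 = []) :
    n = 0 ∧ ∀ b ∈ c.2, ∀ q, M.delta q b ≠ none := by
  induction h with
  | refl c => simp [hd]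
  | @seq c c' c'' n hs hr ih =>
    obtain ⟨a, ha, hda⟩ := hs
    refine ⟨(ih hd).1, ?_⟩
    intro b hb q
    rw [ha] at hb
    rcases List.mem_cons.1 hb with rfl | hb
    · rw [Subsingleton.elim q c.1, hda]; simp
    · exact (ih hd).2 b hb q
  | @jump c c' c'' n hs hr ih =>
    obtain ⟨x, y, a, hx, h1, h2, h3, h4⟩ := hs
    obtain ⟨b, x0, rfl⟩ := List.exists_cons_of_ne_nil hx
    exact absurd (h4 b (by simp)) ((ih hd).2 b (by simp [h2]) c.1)

theorem first_unique {V : Type*} {P : V → Prop} : ∀ {x x' y y' : List V} {a a' : V},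
    x ++ a :: y = x' ++ a' :: y' → (∀ b ∈ x, P b) → (∀ b ∈ x', P b) → ¬ P a → ¬ P a' →
    x = x' ∧ a = a' ∧ y = y'
  | [], [], _, _, _, _, h, _, _, _, _ => by simpa using h
  | [], c :: x', _, _, a, _, h, _, h2, h3, _ => by
    simp only [List.nil_append, List.cons_append, List.cons.injEq] at h
    exact absurd (h.1 ▸ h2 c (by simp)) h3
  | c :: x, [], _, _, a, _, h, h1, _, _, h4 => by
    simp only [List.nil_append, List.cons_append, List.cons.injEq] at h
    exact absurd (h.1 ▸ h1 c (by simp)) h4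
  | c :: x, c' :: x', _, _, a, _, h, h1, h2, h3, h4 => by
    simp only [List.cons_append, List.cons.injEq] at h
    obtain ⟨k1, k2, k3⟩ := first_unique h.2 (fun b hb => h1 b (by simp [hb]))
      (fun b hb => h2 b (by simp [hb])) h3 h4
    exact ⟨by rw [h.1, k1], k2, k3⟩

theorem SeqStep.det {Q V : Type*} {M : DFAwtl Q V} {c d e : Q × List V}
    (h : M.SeqStep c d) (h' : M.SeqStep c e) : d = e := by
  obtain ⟨a, h1, h2⟩ := h
  obtain ⟨b, h3, h4⟩ := h'
  rw [h1, List.cons.injEq] at h3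
  obtain ⟨rfl, h5⟩ := h3
  rw [h2, Option.some.injEq] at h4
  exact Prod.ext h4 h5

theorem JumpStep.det {Q V : Type*} {M : DFAwtl Q V} {c d e : Q × List V}
    (h : M.JumpStep c d) (h' : M.JumpStep c e) : d = e := by
  obtain ⟨x, y, a, hx, h1, h2, h3, h4⟩ := h
  obtain ⟨x', y', a', hx', h1', h2', h3', h4'⟩ := h'
  obtain ⟨rfl, rfl, rfl⟩ := first_unique (P := fun b => M.delta c.1 b = none)
    (h1.symm.trans h1') h4 h4' (by simp [h3]) (by simp [h3'])
  rw [h3, Option.some.injEq] at h3'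
  exact Prod.ext h3' (h2.trans h2'.symm)

theorem SeqStep.not_jump {Q V : Type*} {M : DFAwtl Q V} {c d e : Q × List V}
    (h : M.SeqStep c d) (h' : M.JumpStep c e) : False := by
  obtain ⟨a, k1, k2⟩ := h
  obtain ⟨x, y, b, hx, h1, h2, h3, h4⟩ := h'
  obtain ⟨c', x0, rfl⟩ := List.exists_cons_of_ne_nil hx
  rw [k1, List.cons_append, List.cons.injEq] at h1
  have := h4 c' (by simp)
  rw [← h1.1, k2] at this
  simp at this

theorem StepsN.unique {Q V : Type*} {M : DFAwtl Q V} {c d : Q × List V} {n : ℕ}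
    (h : M.StepsN c d n) (hd : d.2 = []) :
    ∀ {e : Q × List V} {n' : ℕ}, M.StepsN c e n' → e.2 = [] → n = n' := by
  induction h with
  | refl c =>
    intro e n' h he
    cases h with
    | refl => rfl
    | seq hs _ => obtain ⟨a, h1, _⟩ := hs; simp [hd] at h1
    | jump hs _ => obtain ⟨x, y, a, _, h1, _⟩ := hs; simp [hd] at h1
  | @seq c c' c'' n hs hr ih =>
    intro e n' h he
    cases h with
    | refl => obtain ⟨a, h1, _⟩ := hs; simp [he] at h1
    | seq hs' hr' => cases hs.det hs'; exact ih hd hr' he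
    | jump hs' _ => exact (hs.not_jump hs').elim
  | @jump c c' c'' n hs hr ih =>
    intro e n' h he
    cases h with
    | refl => obtain ⟨x, y, a, _, h1, _⟩ := hs; simp [he] at h1
    | seq hs' _ => exact (hs'.not_jump hs).elim
    | jump hs' hr' => cases hs.det hs'; rw [ih hd hr' he]

theorem Steps.exists_stepsN {Q V : Type*} {M : DFAwtl Q V} {c d : Q × List V}
    (h : M.Steps c d) : ∃ n, M.StepsN c d n := by
  induction h using Relation.ReflTransGen.head_induction_on with
  | refl => exact ⟨0, .refl _⟩
  | head hs _ ih =>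
    obtain ⟨n, hn⟩ := ih
    rcases hs with hs | hs
    · exact ⟨n, .seq hs hn⟩
    · exact ⟨n + 1, .jump hs hn⟩

theorem StepsN.steps {Q V : Type*} {M : DFAwtl Q V} {c d : Q × List V} {n : ℕ}
    (h : M.StepsN c d n) : M.Steps c d := by
  induction h with
  | refl c => exact Relation.ReflTransGen.refl
  | seq hs _ ih => exact Relation.ReflTransGen.head (.inl hs) ih
  | jump hs _ ih => exact Relation.ReflTransGen.head (.inr hs) ih

theorem jc_eq {Q V : Type*} {M : DFAwtl Q V} {w : List V} {n : ℕ}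
    (h : M.AcceptsIn w n) : M.jc w = n := by
  have : {k | M.AcceptsIn w k} = {n} := by
    ext k
    constructor
    · rintro ⟨f, _, hk⟩
      obtain ⟨g, _, hg⟩ := h
      exact hk.unique rfl hg rfl
    · rintro rfl
      exact h
  rw [jc, this, csInf_singleton]

end DFAwtl

/-- for every `w ∈ L(M)` with `jc_M(w) = m` there is a word
`w' ∈ L(M)` with `jc_M(w') = m` and `|w'| ≤ (2m+1)(k−1)+m`, where `k = #Q`. -/
theorem stmt_7 {Q V : Type*} [Fintype Q] [Fintype V] (M : DFAwtl Q V)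
    (w : List V) (hw : w ∈ M.lang) (m : ℕ) (hm : M.jc w = m) :
    ∃ w' ∈ M.lang, M.jc w' = m ∧
      w'.length ≤ (2 * m + 1) * (Fintype.card Q - 1) + m := by
  obtain ⟨f, hf, hs⟩ := hw
  obtain ⟨n, hn⟩ := hs.exists_stepsN
  obtain rfl : n = m := (DFAwtl.jc_eq ⟨f, hf, hn⟩).symm.trans hm
  obtain ⟨w', h1, h2⟩ := DFAwtl.shorten' n M.start w hn
  refine ⟨w', ⟨f, hf, h1.steps⟩, DFAwtl.jc_eq ⟨f, hf, h1⟩, ?_⟩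
  have hpos : 0 < Fintype.card Q := Fintype.card_pos_iff.2 ⟨M.start⟩
  obtain ⟨k, hk⟩ : ∃ k, Fintype.card Q = k + 1 := ⟨Fintype.card Q - 1, by omega⟩
  rw [hk] at h2 ⊢
  rw [Nat.add_sub_cancel]
  rcases Nat.eq_zero_or_pos k with rfl | hk0
  · have : Subsingleton Q := Fintype.card_le_one_iff_subsingleton.1 (by omega)
    obtain rfl := (hn.of_subsingleton rfl).1
    omega
  · nlinarith [Nat.mul_le_mul_left n hk0]
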